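/- Let p be a prime, S a commutative ring of characteristic p, and R = S[T, T₁₁, T₁₂, T₂₂] the polynomial ring in four variables. For ij ∈ {11, 12, 22} let D_ij : R → R be the S-linear operator D_ij(f) = (T_ij + 1)·∂f/∂T_ij. Define Θ₁(f) = T²·D₁₁(f) − T·D₁₂(f) + D₂₂(f), Θ₂(f) = 2T^{p+1}·D₁₁(f) − (T + T^p)·D₁₂(f) + 2·D₂₂(f), and Θ₃(f) = T^{2p}·D₁₁(f) − T^p·D₁₂(f) + D₂₂(f). Then 4·(Θ₁ ∘ Θ₃) − Θ₂ ∘ Θ₂ equals multiplication by (T − T^p)² composed with the operator 4·(D₁₁ ∘ D₂₂) − D₁₂ ∘ D₁₂; that is, for every f ∈ R, 4·Θ₁(Θ₃(f)) − Θ₂(Θ₂(f)) = (T − T^p)²·(4·D₁₁(D₂₂(f)) − D₁₂(D₁₂(f))). -/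

import Mathlib

open MvPolynomial

/-- The operator `D_ij : f ↦ (T_ij + 1)·∂f/∂T_ij` on `S[T, T₁₁, T₁₂, T₂₂]`,
with the variables indexed by `Fin 4` as `0 ↦ T`, `1 ↦ T₁₁`, `2 ↦ T₁₂`, `3 ↦ T₂₂`. -/
noncomputable def Dij {S : Type*} [CommRing S] (i : Fin 4) (f : MvPolynomial (Fin 4) S) :
    MvPolynomial (Fin 4) S :=
  (X i + 1) * pderiv i f

/-- `Θ₁ f = T²·D₁₁ f − T·D₁₂ f + D₂₂ f`. -/
noncomputable def Theta1 {S : Type*} [CommRing S] (f : MvPolynomial (Fin 4) S) :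
    MvPolynomial (Fin 4) S :=
  X 0 ^ 2 * Dij 1 f - X 0 * Dij 2 f + Dij 3 f

/-- `Θ₂ f = 2T^{p+1}·D₁₁ f − (T + T^p)·D₁₂ f + 2·D₂₂ f`. -/
noncomputable def Theta2 {S : Type*} [CommRing S] (p : ℕ) (f : MvPolynomial (Fin 4) S) :
    MvPolynomial (Fin 4) S :=
  2 * X 0 ^ (p + 1) * Dij 1 f - (X 0 + X 0 ^ p) * Dij 2 f + 2 * Dij 3 f

/-- `Θ₃ f = T^{2p}·D₁₁ f − T^p·D₁₂ f + D₂₂ f`. -/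
noncomputable def Theta3 {S : Type*} [CommRing S] (p : ℕ) (f : MvPolynomial (Fin 4) S) :
    MvPolynomial (Fin 4) S :=
  X 0 ^ (2 * p) * Dij 1 f - X 0 ^ p * Dij 2 f + Dij 3 f

/-- `θ₄⁽ᴺ⁾ f = (T − T^p)·∂f/∂T + N·f`. -/
noncomputable def theta4 {S : Type*} [CommRing S] (p : ℕ) (N : ℤ) (f : MvPolynomial (Fin 4) S) :
    MvPolynomial (Fin 4) S :=
  (X 0 - X 0 ^ p) * pderiv 0 f + (N : MvPolynomial (Fin 4) S) * f

theorem Dij_coe_mul {S : Type*} [CommRing S] (i : Fin 4) (c f : MvPolynomial (Fin 4) S)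
    (hc : pderiv i c = 0) : Dij i (c * f) = c * Dij i f := by
  simp only [Dij, Derivation.leibniz, hc, smul_eq_mul]
  ring

theorem Dij_add' {S : Type*} [CommRing S] (i : Fin 4) (f g : MvPolynomial (Fin 4) S) :
    Dij i (f + g) = Dij i f + Dij i g := by
  simp only [Dij, map_add]; ring

theorem Dij_sub' {S : Type*} [CommRing S] (i : Fin 4) (f g : MvPolynomial (Fin 4) S) :
    Dij i (f - g) = Dij i f - Dij i g := by
  simp only [Dij, map_sub]; ring

theorem pderiv_comm' {S : Type*} [CommRing S] (i j : Fin 4) (f : MvPolynomial (Fin 4) S) :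
    pderiv i (pderiv j f) = pderiv j (pderiv i f) := by
  have h : ⁅(pderiv i : Derivation S (MvPolynomial (Fin 4) S) (MvPolynomial (Fin 4) S)),
      (pderiv j : Derivation S (MvPolynomial (Fin 4) S) (MvPolynomial (Fin 4) S))⁆ = 0 := by
    apply MvPolynomial.derivation_ext
    intro k
    rw [Derivation.commutator_apply]
    simp only [pderiv_X, Derivation.zero_apply, Pi.single_apply]
    split_ifs <;> simp
  have h2 := congrArg (fun D => D f) h
  simp only [Derivation.commutator_apply, Derivation.zero_apply] at h2
  exact sub_eq_zero.mp h2

theorem Dij_comm' {S : Type*} [CommRing S] (i j : Fin 4) (hij : i ≠ j)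
    (f : MvPolynomial (Fin 4) S) : Dij i (Dij j f) = Dij j (Dij i f) := by
  simp only [Dij, Derivation.leibniz, smul_eq_mul, map_add, pderiv_X_of_ne hij,
    pderiv_X_of_ne hij.symm, pderiv_one, pderiv_comm' i j f]
  ring

theorem pderiv_zero_pow {S : Type*} [CommRing S] (i : Fin 4) (hi : 0 ≠ i) (n : ℕ) :
    pderiv i ((X 0 : MvPolynomial (Fin 4) S) ^ n) = 0 := by
  simp [Derivation.leibniz_pow, pderiv_X_of_ne hi]

theorem pderiv_two' {S : Type*} [CommRing S] (i : Fin 4) :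
    pderiv i (2 : MvPolynomial (Fin 4) S) = 0 := by
  exact_mod_cast (pderiv i).map_natCast 2

/-- Let `p` be a prime and `S` a commutative ring of characteristic `p`.  Then
`4·(Θ₁ ∘ Θ₃) − Θ₂ ∘ Θ₂` equals multiplication by `(T − T^p)²` composed with
`4·(D₁₁ ∘ D₂₂) − D₁₂ ∘ D₁₂` on `S[T, T₁₁, T₁₂, T₂₂]`. -/
theorem stmt_15 (p : ℕ) (hp : p.Prime) (S : Type*) [CommRing S] [CharP S p]
    (f : MvPolynomial (Fin 4) S) :
    4 * Theta1 (Theta3 p f) - Theta2 p (Theta2 p f)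
      = (X 0 - X 0 ^ p) ^ 2 * (4 * Dij 1 (Dij 3 f) - Dij 2 (Dij 2 f)) := by
  have h1 : ∀ i : Fin 4, 0 ≠ i → ∀ n (g : MvPolynomial (Fin 4) S),
      Dij i (X 0 ^ n * g) = X 0 ^ n * Dij i g := fun i hi n g =>
    Dij_coe_mul i _ g (pderiv_zero_pow i hi n)
  have h2 : ∀ i : Fin 4, 0 ≠ i → ∀ n (g : MvPolynomial (Fin 4) S),
      Dij i (2 * X 0 ^ n * g) = 2 * X 0 ^ n * Dij i g := fun i hi n g =>
    Dij_coe_mul i _ g (by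
      rw [Derivation.leibniz, pderiv_zero_pow i hi n, pderiv_two']; simp)
  have h3 : ∀ i : Fin 4, 0 ≠ i → ∀ g : MvPolynomial (Fin 4) S,
      Dij i ((X 0 + X 0 ^ p) * g) = (X 0 + X 0 ^ p) * Dij i g := fun i hi g =>
    Dij_coe_mul i _ g (by
      rw [map_add, pderiv_zero_pow i hi p, pderiv_X_of_ne hi]; simp)
  have h4 : ∀ i : Fin 4, ∀ g : MvPolynomial (Fin 4) S,
      Dij i (2 * g) = 2 * Dij i g := fun i g =>
    Dij_coe_mul i _ g (pderiv_two' i)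
  have e1 : (0 : Fin 4) ≠ 1 := by decide
  have e2 : (0 : Fin 4) ≠ 2 := by decide
  have e3 : (0 : Fin 4) ≠ 3 := by decide
  simp only [Theta1, Theta2, Theta3, Dij_add', Dij_sub', h1 1 e1, h1 2 e2, h1 3 e3,
    h2 1 e1, h2 2 e2, h2 3 e3, h3 1 e1, h3 2 e2, h3 3 e3, h4]
  rw [Dij_comm' 2 1 (by decide) f, Dij_comm' 3 1 (by decide) f, Dij_comm' 3 2 (by decide) f]
  ring
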